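/- Let f, g ∈ L¹(μ) be nonnegative and nonzero, with f·log f and g·log g integrable. If in addition f·g = 0 μ-almost everywhere and ‖f‖₁ = ‖g‖₁, then Φ₁(f) + Φ₁(g) − Φ₁(f+g) = (log 2)·(‖f‖₁ + ‖g‖₁). Consequently the constant log 2 in the upper bound Φ₁(f) + Φ₁(g) − Φ₁(f+g) ≤ (log 2)(‖f‖₁+‖g‖₁) is optimal: the optimal constant δ(Φ₁) for the space L¹ equals log 2. -/

import Mathlib

open MeasureTheory

/-- The entropy functional (indicator of `L¹`):
`Φ₁(f) = ∫ f·log f dμ − ‖f‖₁·log ‖f‖₁` (with `Real.log 0 = 0`, so `Φ₁(0) = 0`). -/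
noncomputable def Phi1 {S : Type*} [MeasurableSpace S] (μ : Measure S) (f : S → ℝ) : ℝ :=
  ∫ s, f s * Real.log (f s) ∂μ - (∫ s, f s ∂μ) * Real.log (∫ s, f s ∂μ)

/-!
Since `0 * log 0 = 0`, the functional `∫ f * log f` is additive on functions with disjoint
supports, so the defect `Φ₁(f) + Φ₁(g) − Φ₁(f + g)` retains only the norm terms. With `a = ‖f‖₁`
and `b = ‖g‖₁` these are `a + b` times the entropy of the distribution `(a / (a + b), b / (a + b))`,
and equal norms give the uniform distribution on two points, whose entropy is `log 2`.
-/

/-- The constants `δ` with `Φ₁(f) + Φ₁(g) − Φ₁(f + g) ≤ δ (‖f‖₁ + ‖g‖₁)` for all nonzero `f, g ≥ 0`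
of finite entropy. The optimal constant `δ(Φ₁)` is the least of them. The functions are
integrable representatives, and `‖f‖₁` is written `∫ f`, as `f ≥ 0`. -/
def IsPhi1DefectBound {S : Type*} [MeasurableSpace S] (μ : Measure S) (δ : ℝ) : Prop :=
  ∀ f g : S → ℝ, Integrable f μ → Integrable g μ →
    0 ≤ᵐ[μ] f → 0 ≤ᵐ[μ] g → ¬ f =ᵐ[μ] 0 → ¬ g =ᵐ[μ] 0 →
    Integrable (fun s => f s * Real.log (f s)) μ →
    Integrable (fun s => g s * Real.log (g s)) μ →
    Phi1 μ f + Phi1 μ g - Phi1 μ (fun s => f s + g s) ≤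
      δ * ((∫ s, f s ∂μ) + ∫ s, g s ∂μ)

theorem add_mul_log_add_of_mul_eq_zero {a b : ℝ} (h : a * b = 0) :
    (a + b) * Real.log (a + b) = a * Real.log a + b * Real.log b := by
  rcases mul_eq_zero.mp h with rfl | rfl <;> simp

theorem negMulLog_add_negMulLog_sub_negMulLog_add {a b : ℝ} (h : a + b ≠ 0) :
    Real.negMulLog a + Real.negMulLog b - Real.negMulLog (a + b) =
      Real.binEntropy (a / (a + b)) * (a + b) := by
  set p := a / (a + b)
  have ha : a = (a + b) * p := (mul_div_cancel₀ a h).symm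
  have hb : b = (a + b) * (1 - p) := by linear_combination -ha
  calc Real.negMulLog a + Real.negMulLog b - Real.negMulLog (a + b)
      = Real.negMulLog ((a + b) * p) + Real.negMulLog ((a + b) * (1 - p))
          - Real.negMulLog (a + b) := by rw [← ha, ← hb]
    _ = (Real.negMulLog p + Real.negMulLog (1 - p)) * (a + b) := by
        rw [Real.negMulLog_mul, Real.negMulLog_mul]; ring
    _ = Real.binEntropy p * (a + b) := by
        rw [Real.binEntropy_eq_negMulLog_add_negMulLog_one_sub]

theorem binEntropy_div_add_of_eq {a b : ℝ} (ha : a ≠ 0) (hab : a = b) :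
    Real.binEntropy (a / (a + b)) = Real.log 2 := by
  rw [← hab, ← two_mul, div_mul_cancel_right₀ ha, Real.binEntropy_two_inv]

section

variable {S : Type*} [MeasurableSpace S] {μ : Measure S} {f g : S → ℝ}

theorem integral_pos_of_ae_nonneg_of_not_ae_eq_zero (hf : Integrable f μ)
    (hf_nonneg : 0 ≤ᵐ[μ] f) (hf_ne : ¬ f =ᵐ[μ] 0) : 0 < ∫ s, f s ∂μ :=
  (integral_nonneg_of_ae hf_nonneg).lt_of_ne' <|
    mt (integral_eq_zero_iff_of_nonneg_ae hf_nonneg hf).mp hf_ne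

theorem integral_add_mul_log_add_of_ae_mul_eq_zero
    (hflog : Integrable (fun s => f s * Real.log (f s)) μ)
    (hglog : Integrable (fun s => g s * Real.log (g s)) μ)
    (hdisj : ∀ᵐ s ∂μ, f s * g s = 0) :
    ∫ s, (f s + g s) * Real.log (f s + g s) ∂μ =
      ∫ s, f s * Real.log (f s) ∂μ + ∫ s, g s * Real.log (g s) ∂μ := by
  rw [← integral_add hflog hglog]
  exact integral_congr_ae (hdisj.mono fun _ => add_mul_log_add_of_mul_eq_zero)

theorem Phi1_add_Phi1_sub_Phi1_add_of_ae_mul_eq_zero (hf : Integrable f μ) (hg : Integrable g μ)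
    (hflog : Integrable (fun s => f s * Real.log (f s)) μ)
    (hglog : Integrable (fun s => g s * Real.log (g s)) μ)
    (hdisj : ∀ᵐ s ∂μ, f s * g s = 0) :
    Phi1 μ f + Phi1 μ g - Phi1 μ (fun s => f s + g s) =
      Real.negMulLog (∫ s, f s ∂μ) + Real.negMulLog (∫ s, g s ∂μ)
        - Real.negMulLog ((∫ s, f s ∂μ) + ∫ s, g s ∂μ) := by
  simp only [Phi1, Real.negMulLog, integral_add hf hg,
    integral_add_mul_log_add_of_ae_mul_eq_zero hflog hglog hdisj]
  ring

end

theorem stmt4_general {S : Type*} [MeasurableSpace S] (μ : Measure S)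
    (f g : S → ℝ) (hf : Integrable f μ) (hg : Integrable g μ)
    (hf_nonneg : 0 ≤ᵐ[μ] f) (hg_nonneg : 0 ≤ᵐ[μ] g)
    (hf_ne : ¬ f =ᵐ[μ] 0) (hg_ne : ¬ g =ᵐ[μ] 0)
    (hflog : Integrable (fun s => f s * Real.log (f s)) μ)
    (hglog : Integrable (fun s => g s * Real.log (g s)) μ)
    (hdisj : ∀ᵐ s ∂μ, f s * g s = 0) :
    Phi1 μ f + Phi1 μ g - Phi1 μ (fun s => f s + g s) =
      Real.binEntropy ((∫ s, f s ∂μ) / ((∫ s, f s ∂μ) + ∫ s, g s ∂μ)) *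
        ((∫ s, f s ∂μ) + ∫ s, g s ∂μ) ∧
    ∀ δ : ℝ, IsPhi1DefectBound μ δ →
      Real.binEntropy ((∫ s, f s ∂μ) / ((∫ s, f s ∂μ) + ∫ s, g s ∂μ)) ≤ δ := by
  have hpos : 0 < (∫ s, f s ∂μ) + ∫ s, g s ∂μ :=
    add_pos (integral_pos_of_ae_nonneg_of_not_ae_eq_zero hf hf_nonneg hf_ne)
      (integral_pos_of_ae_nonneg_of_not_ae_eq_zero hg hg_nonneg hg_ne)
  have hdefect := (Phi1_add_Phi1_sub_Phi1_add_of_ae_mul_eq_zero hf hg hflog hglog hdisj).trans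
    (negMulLog_add_negMulLog_sub_negMulLog_add hpos.ne')
  refine ⟨hdefect, fun δ hδ => le_of_mul_le_mul_right ?_ hpos⟩
  exact hdefect.symm.trans_le (hδ f g hf hg hf_nonneg hg_nonneg hf_ne hg_ne hflog hglog)

theorem stmt4 {S : Type*} [MeasurableSpace S] (μ : Measure S) [SigmaFinite μ]
    (f g : S → ℝ) (hf : Integrable f μ) (hg : Integrable g μ)
    (hf_nonneg : 0 ≤ᵐ[μ] f) (hg_nonneg : 0 ≤ᵐ[μ] g)
    (hf_ne : ¬ f =ᵐ[μ] 0) (hg_ne : ¬ g =ᵐ[μ] 0)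
    (hflog : Integrable (fun s => f s * Real.log (f s)) μ)
    (hglog : Integrable (fun s => g s * Real.log (g s)) μ)
    (hdisj : ∀ᵐ s ∂μ, f s * g s = 0)
    (hnorm : (∫ s, f s ∂μ) = ∫ s, g s ∂μ) :
    Phi1 μ f + Phi1 μ g - Phi1 μ (fun s => f s + g s) =
      Real.log 2 * ((∫ s, f s ∂μ) + ∫ s, g s ∂μ) ∧
    -- consequently, `log 2` is the optimal constant `δ(Φ₁)` for the space `L¹`:
    ∀ δ : ℝ,
      (∀ f' g' : S → ℝ, Integrable f' μ → Integrable g' μ →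
        0 ≤ᵐ[μ] f' → 0 ≤ᵐ[μ] g' → ¬ f' =ᵐ[μ] 0 → ¬ g' =ᵐ[μ] 0 →
        Integrable (fun s => f' s * Real.log (f' s)) μ →
        Integrable (fun s => g' s * Real.log (g' s)) μ →
        Phi1 μ f' + Phi1 μ g' - Phi1 μ (fun s => f' s + g' s) ≤
          δ * ((∫ s, f' s ∂μ) + ∫ s, g' s ∂μ)) →
      Real.log 2 ≤ δ := by
  rw [← binEntropy_div_add_of_eq
    (integral_pos_of_ae_nonneg_of_not_ae_eq_zero hf hf_nonneg hf_ne).ne' hnorm]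
  exact stmt4_general μ f g hf hg hf_nonneg hg_nonneg hf_ne hg_ne hflog hglog hdisj
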